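/- For every integer k ≥ 1 there exist constants c > 0 and C > 0 (depending only on k) such that the following holds for all sufficiently large N. Set Q := exp((log N)^{1/10}). Let 2 ≤ w ≤ z ≤ Q be reals with w ≤ (log N)^{1/100}, and set W := ∏_{p < w, p prime} p. Then for every integer 1 ≤ b ≤ W with gcd(b, W) = 1 one has ‖(φ(W)/W)·Λ_{Cramér,z}(W·+ b) − 1‖_{U^k([(N−b)/W])} ≤ C·w^{−c}, where Λ_{Cramér,z}(W·+b) denotes the function n ↦ Λ_{Cramér,z}(Wn + b) and φ is Euler's totient function. -/

import Mathlib

open scoped Classical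

noncomputable section

/-- The product of conjugated shifts appearing in the Gowers norm over an additive group. -/
def gowersProd {G : Type*} [AddCommGroup G] (k : ℕ) (f : G → ℂ) (n : G) (h : Fin k → G) : ℂ :=
  ∏ ω : Fin k → Bool,
    (⇑(starRingEnd ℂ))^[(Finset.univ.filter fun i => ω i = true).card]
      (f (n + ∑ i, if ω i then h i else 0))

/-- The unnormalized Gowers norm `‖f‖_{Ũ^k(G)}`. -/
def gowersTildeU {G : Type*} [AddCommGroup G] (k : ℕ) (f : G → ℂ) : ℝ :=
  (∑' nh : G × (Fin k → G), gowersProd k f nh.1 nh.2).re ^ ((1 : ℝ) / 2 ^ k)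

/-- The restriction `f·1_{[N]}` of `f : ℤ → ℂ` to `[N] = {n ∈ ℕ : 1 ≤ n ≤ N}`. -/
def truncN (N : ℝ) (f : ℤ → ℂ) : ℤ → ℂ := fun n => if 1 ≤ n ∧ (n : ℝ) ≤ N then f n else 0

/-- The local (normalized) Gowers norm `‖f‖_{U^k([N])}`. -/
def gowersUN (k : ℕ) (N : ℝ) (f : ℤ → ℂ) : ℝ :=
  gowersTildeU k (truncN N f) / gowersTildeU k (truncN N fun _ => 1)

/-- The Cramér model `Λ_{Cramér,w}(n) = ∏_{p < w, p prime} (p/(p-1))·1_{p ∤ n}`. -/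
def cramer (w : ℝ) (n : ℤ) : ℝ :=
  ∏ p ∈ (Finset.range (⌈w⌉₊ + 1)).filter fun p => Nat.Prime p ∧ (p : ℝ) < w,
    if (p : ℤ) ∣ n then 0 else (p : ℝ) / ((p : ℝ) - 1)

/-- The quantity `Q = exp((log N)^{1/10})`. -/
def Qparam (N : ℝ) : ℝ := Real.exp (Real.log N ^ ((1 : ℝ) / 10))

/-- The primorial `P(w) = ∏_{p < w, p prime} p`. -/
def primorialLT (w : ℝ) : ℕ :=
  ∏ p ∈ (Finset.range (⌈w⌉₊ + 1)).filter fun p => Nat.Prime p ∧ (p : ℝ) < w, p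

end

noncomputable def esy (ρ : ℕ → ℝ) (j : ℕ) (P : Finset ℕ) : ℝ := ∑ D ∈ P.powersetCard j, ∏ p ∈ D, ρ p

lemma esy_zero (ρ : ℕ → ℝ) (P : Finset ℕ) : esy ρ 0 P = 1 := by simp [esy]

lemma esy_succ_insert (ρ : ℕ → ℝ) (j a : ℕ) (P : Finset ℕ) (ha : a ∉ P) :
    esy ρ (j+1) (insert a P) = esy ρ (j+1) P + ρ a * esy ρ j P := by
  unfold esy
  rw [Finset.powersetCard_succ_insert ha, Finset.sum_union]
  · congr 1
    rw [Finset.sum_image, Finset.mul_sum]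
    · apply Finset.sum_congr rfl
      intro D hD
      rw [Finset.prod_insert]
      exact fun h => ha ((Finset.mem_powersetCard.1 hD).1 h)
    · intro D hD D' hD' h
      have h1 : a ∉ D := fun h => ha ((Finset.mem_powersetCard.1 hD).1 h)
      have h2 : a ∉ D' := fun h => ha ((Finset.mem_powersetCard.1 hD').1 h)
      rw [← Finset.erase_insert h1, ← Finset.erase_insert h2]
      exact congrArg (fun s => Finset.erase s a) h
  · rw [Finset.disjoint_left]
    intro D hD hD'
    obtain ⟨D', _, rfl⟩ := Finset.mem_image.1 hD'
    exact ha ((Finset.mem_powersetCard.1 hD).1 (Finset.mem_insert_self _ _))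

lemma bonferroni (ρ : ℕ → ℝ) (P : Finset ℕ) (h0 : ∀ p ∈ P, 0 ≤ ρ p) (h1 : ∀ p ∈ P, ρ p ≤ 1) :
    ∀ r : ℕ, |∏ p ∈ P, (1 - ρ p) - ∑ j ∈ Finset.range r, (-1)^j * esy ρ j P| ≤ esy ρ r P := by
  induction P using Finset.induction_on with
  | empty =>
    intro r
    cases r with
    | zero => simp [esy]
    | succ r =>
      have he : ∀ j, Finset.powersetCard (j+1) (∅ : Finset ℕ) = ∅ :=
        fun j => Finset.powersetCard_eq_empty.2 (by simp)
      rw [Finset.sum_range_succ']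
      simp [esy, he]
  | insert a P ha ih =>
    intro r
    have ih' := ih (fun p hp => h0 p (Finset.mem_insert_of_mem hp))
      (fun p hp => h1 p (Finset.mem_insert_of_mem hp))
    have ha0 := h0 a (Finset.mem_insert_self _ _)
    have ha1 := h1 a (Finset.mem_insert_self _ _)
    cases r with
    | zero =>
      have : |∏ p ∈ insert a P, (1 - ρ p)| ≤ 1 := by
        rw [Finset.abs_prod]
        apply Finset.prod_le_one (fun _ _ => abs_nonneg _)
        intro p hp
        rw [abs_le]
        constructor <;> linarith [h0 p hp, h1 p hp]
      simpa [esy_zero] using this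
    | succ r =>
      rw [Finset.prod_insert ha, esy_succ_insert _ _ _ _ ha]
      have e : ∑ j ∈ Finset.range (r+1), (-1:ℝ)^j * esy ρ j (insert a P)
          = ∑ j ∈ Finset.range (r+1), (-1:ℝ)^j * esy ρ j P
            - ρ a * ∑ j ∈ Finset.range r, (-1:ℝ)^j * esy ρ j P := by
        rw [Finset.sum_range_succ', Finset.sum_range_succ' _ r, esy_zero, esy_zero]
        simp only [esy_succ_insert _ _ _ _ ha]
        rw [Finset.mul_sum, add_sub_right_comm, ← Finset.sum_sub_distrib]
        congr 1
        apply Finset.sum_congr rfl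
        intro j _
        ring
      rw [e]
      have i1 := ih' (r+1)
      have i2 := ih' r
      calc _ = |(∏ p ∈ P, (1 - ρ p) - ∑ j ∈ Finset.range (r+1), (-1)^j * esy ρ j P)
              - ρ a * (∏ p ∈ P, (1 - ρ p) - ∑ j ∈ Finset.range r, (-1)^j * esy ρ j P)| := by
            congr 1; ring
        _ ≤ _ := by
            refine (abs_sub _ _).trans ?_
            rw [abs_mul, abs_of_nonneg ha0]
            gcongr

lemma esy_le (ρ : ℕ → ℝ) (P : Finset ℕ) (h0 : ∀ p ∈ P, 0 ≤ ρ p) (r : ℕ) :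
    esy ρ r P ≤ (1/2)^r * Real.exp (2 * ∑ p ∈ P, ρ p) := by
  have h1 : ∏ p ∈ P, (1 + 2 * ρ p) ≤ Real.exp (2 * ∑ p ∈ P, ρ p) := by
    rw [Finset.mul_sum, Real.exp_sum]
    apply Finset.prod_le_prod
    · intro p hp; linarith [h0 p hp]
    · intro p hp
      rw [add_comm]; exact Real.add_one_le_exp _
  have h2 : 2^r * esy ρ r P ≤ ∏ p ∈ P, (1 + 2 * ρ p) := by
    rw [Finset.prod_one_add]
    unfold esy
    rw [Finset.mul_sum]
    calc _ = ∑ D ∈ P.powersetCard r, ∏ p ∈ D, (2 * ρ p) := by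
          apply Finset.sum_congr rfl
          intro D hD
          rw [Finset.prod_mul_distrib, Finset.prod_const, (Finset.mem_powersetCard.1 hD).2]
      _ ≤ _ := by
          apply Finset.sum_le_sum_of_subset_of_nonneg
          · intro D hD
            exact Finset.mem_powerset.2 (Finset.mem_powersetCard.1 hD).1
          · intro D hD _
            apply Finset.prod_nonneg
            intro p hp
            have := h0 p (Finset.mem_powerset.1 hD hp)
            positivity
  have h3 : (1/2:ℝ)^r * 2^r = 1 := by rw [← mul_pow]; norm_num
  calc esy ρ r P = (1/2)^r * (2^r * esy ρ r P) := by rw [← mul_assoc, h3, one_mul]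
    _ ≤ _ := by gcongr; exact h2.trans h1

lemma sieve {X : Type*} (Ω : Finset X) (g : ℕ → X → ℝ) (ρ : ℕ → ℝ) (P : Finset ℕ) (r : ℕ) (B : ℝ)
    (hg0 : ∀ p x, 0 ≤ g p x) (hg1 : ∀ p x, g p x ≤ 1)
    (h0 : ∀ p ∈ P, 0 ≤ ρ p) (h1 : ∀ p ∈ P, ρ p ≤ 1)
    (hB : ∀ D ⊆ P, D.card ≤ r → |∑ x ∈ Ω, ∏ p ∈ D, g p x - Ω.card * ∏ p ∈ D, ρ p| ≤ B) :
    |∑ x ∈ Ω, ∏ p ∈ P, (1 - g p x) - Ω.card * ∏ p ∈ P, (1 - ρ p)| ≤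
      (∑ j ∈ Finset.range (r+1), (P.card.choose j : ℝ)) * B + 2 * Ω.card * esy ρ r P := by
  have key : ∀ j ≤ r, |∑ x ∈ Ω, esy (fun p => g p x) j P - Ω.card * esy ρ j P|
      ≤ (P.card.choose j : ℝ) * B := by
    intro j hj
    unfold esy
    rw [Finset.sum_comm, Finset.mul_sum, ← Finset.sum_sub_distrib]
    refine (Finset.abs_sum_le_sum_abs _ _).trans ?_
    rw [← Finset.card_powersetCard, ← nsmul_eq_mul]
    apply Finset.sum_le_card_nsmul
    intro D hD
    have := Finset.mem_powersetCard.1 hD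
    exact hB D this.1 (this.2.trans_le hj)
  have b1 : |∑ x ∈ Ω, ∏ p ∈ P, (1 - g p x)
      - ∑ x ∈ Ω, ∑ j ∈ Finset.range r, (-1)^j * esy (fun p => g p x) j P|
      ≤ ∑ x ∈ Ω, esy (fun p => g p x) r P := by
    rw [← Finset.sum_sub_distrib]
    refine (Finset.abs_sum_le_sum_abs _ _).trans ?_
    apply Finset.sum_le_sum
    intro x _
    exact bonferroni (fun p => g p x) P (fun p _ => hg0 p x) (fun p _ => hg1 p x) r
  have b2 := bonferroni ρ P h0 h1 r
  have b3 : |∑ x ∈ Ω, ∑ j ∈ Finset.range r, (-1)^j * esy (fun p => g p x) j P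
      - Ω.card * ∑ j ∈ Finset.range r, (-1)^j * esy ρ j P|
      ≤ ∑ j ∈ Finset.range r, (P.card.choose j : ℝ) * B := by
    rw [Finset.sum_comm, Finset.mul_sum, ← Finset.sum_sub_distrib]
    refine (Finset.abs_sum_le_sum_abs _ _).trans ?_
    apply Finset.sum_le_sum
    intro j hj
    rw [← Finset.mul_sum]
    calc _ = |(-1:ℝ)^j * (∑ x ∈ Ω, esy (fun p => g p x) j P - Ω.card * esy ρ j P)| := by
          congr 1; ring
      _ ≤ _ := by
          rw [abs_mul, abs_pow]; simp only [abs_neg, abs_one, one_pow, one_mul]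
          exact key j (Finset.mem_range.1 hj).le
  have b4 := key r le_rfl
  have b5 : |(Ω.card : ℝ) * ∏ p ∈ P, (1 - ρ p)
      - Ω.card * ∑ j ∈ Finset.range r, (-1)^j * esy ρ j P| ≤ Ω.card * esy ρ r P := by
    rw [← mul_sub, abs_mul, Nat.abs_cast]
    gcongr
  rw [Finset.sum_range_succ, add_mul, Finset.sum_mul]
  rw [abs_le] at *
  constructor <;> linarith [b1.1, b1.2, b3.1, b3.2, b4.1, b4.2, b5.1, b5.2]

def Lf {R : Type*} [AddCommMonoid R] {k : ℕ} (ω : Fin k → Bool) (x : R × (Fin k → R)) : R :=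
  x.1 + ∑ i, if ω i then x.2 i else 0

lemma Lf_add {R : Type*} [AddCommMonoid R] {k : ℕ} (ω : Fin k → Bool) (x y : R × (Fin k → R)) :
    Lf ω (x + y) = Lf ω x + Lf ω y := by
  unfold Lf
  have : ∀ i, (if ω i then (x + y).2 i else 0) =
      (if ω i then x.2 i else 0) + (if ω i then y.2 i else 0) := by
    intro i; split_ifs <;> simp
  simp only [this, Finset.sum_add_distrib, Prod.fst_add]
  abel

def redp {k : ℕ} (p : ℕ) (x : ℤ × (Fin k → ℤ)) : ZMod p × (Fin k → ZMod p) :=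
  ((x.1 : ZMod p), fun i => (x.2 i : ZMod p))

lemma Lf_redp {k : ℕ} (p : ℕ) (ω : Fin k → Bool) (x : ℤ × (Fin k → ℤ)) :
    Lf ω (redp p x) = ((Lf ω x : ℤ) : ZMod p) := by
  unfold Lf redp
  push_cast
  rfl

def SmallV {k : ℕ} (d : ℕ) (s : ℤ × (Fin k → ℤ)) : Prop :=
  (0 ≤ s.1 ∧ s.1 ≤ (d:ℤ) - 1) ∧ ∀ i, 0 ≤ s.2 i ∧ s.2 i ≤ (d:ℤ) - 1

def HasMean {k : ℕ} (g : ℤ × (Fin k → ℤ) → ℝ) (μ : ℝ) (d : ℕ) : Prop :=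
  ∃ (T : Type) (_ : Fintype T) (_ : Nonempty T) (s : T → ℤ × (Fin k → ℤ)),
    (∀ t, SmallV d (s t)) ∧ ∀ x, ∑ t, g (x + s t) = Fintype.card T * μ

def LocMean {k : ℕ} (g : ℤ × (Fin k → ℤ) → ℝ) (μ : ℝ) (p : ℕ) : Prop :=
  (∀ x v, g (x + (p:ℤ) • v) = g x) ∧ ∀ d : ℕ, Nat.Coprime d p →
  ∃ (T : Type) (_ : Fintype T) (_ : Nonempty T) (s : T → ℤ × (Fin k → ℤ)),
    (∀ t, SmallV p (s t)) ∧ ∀ x, ∑ t, g (x + (d:ℤ) • s t) = Fintype.card T * μ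

lemma hasMean_prod {k : ℕ} (g : ℕ → ℤ × (Fin k → ℤ) → ℝ) (ρ : ℕ → ℝ) (D : Finset ℕ)
    (hp : ∀ p ∈ D, p.Prime) (hl : ∀ p ∈ D, LocMean (g p) (ρ p) p) :
    HasMean (fun x => ∏ p ∈ D, g p x) (∏ p ∈ D, ρ p) (∏ p ∈ D, p) := by
  induction D using Finset.induction_on with
  | empty =>
    refine ⟨Unit, inferInstance, inferInstance, fun _ => 0, ?_, ?_⟩
    · intro t; simp [SmallV]
    · simp
  | insert p D hpD ih =>
    obtain ⟨T, _, _, s, hs, hm⟩ := ih (fun q hq => hp q (Finset.mem_insert_of_mem hq))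
      (fun q hq => hl q (Finset.mem_insert_of_mem hq))
    set d := ∏ q ∈ D, q with hd
    have hpp := hp p (Finset.mem_insert_self _ _)
    have hcop : Nat.Coprime d p := by
      rw [hd]
      apply Nat.Coprime.prod_left
      intro q hq
      rw [Nat.coprime_primes (hp q (Finset.mem_insert_of_mem hq)) hpp]
      rintro rfl; exact hpD hq
    have hdpos : 0 < d := Finset.prod_pos fun q hq => (hp q (Finset.mem_insert_of_mem hq)).pos
    obtain ⟨T', _, _, s', hs', hm'⟩ := (hl p (Finset.mem_insert_self _ _)).2 d hcop
    refine ⟨T × T', inferInstance, inferInstance, fun t => s t.1 + (d:ℤ) • s' t.2, ?_, ?_⟩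
    · rintro ⟨t, t'⟩
      rw [Finset.prod_insert hpD, ← hd]
      have aux : ∀ a b : ℤ, 0 ≤ a → a ≤ (d:ℤ) - 1 → 0 ≤ b → b ≤ (p:ℤ) - 1 →
          0 ≤ a + d * b ∧ a + d * b ≤ ((p * d : ℕ) : ℤ) - 1 := by
        intro a b h1 h2 h3 h4
        have : (0:ℤ) < d := by exact_mod_cast hdpos
        push_cast
        constructor
        · positivity
        · nlinarith
      obtain ⟨⟨a1, a2⟩, a3⟩ := hs t
      obtain ⟨⟨b1, b2⟩, b3⟩ := hs' t'
      refine ⟨?_, fun i => ?_⟩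
      · simpa using aux _ _ a1 a2 b1 b2
      · simpa using aux _ _ (a3 i).1 (a3 i).2 (b3 i).1 (b3 i).2
    · intro x
      rw [Fintype.sum_prod_type]
      have e1 : ∀ t t', (∏ q ∈ insert p D, g q (x + (s t + (d:ℤ) • s' t')))
          = (∏ q ∈ D, g q (x + s t)) * g p (x + s t + (d:ℤ) • s' t') := by
        intro t t'
        rw [Finset.prod_insert hpD, mul_comm, ← add_assoc]
        congr 1
        apply Finset.prod_congr rfl
        intro q hq
        obtain ⟨c, hc⟩ := Finset.dvd_prod_of_mem (fun q => q) hq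
        have : (d:ℤ) • s' t' = (q:ℤ) • ((c:ℤ) • s' t') := by
          rw [smul_smul]; congr 1; rw [hd, hc]; push_cast; rfl
        rw [this]
        exact (hl q (Finset.mem_insert_of_mem hq)).1 _ _
      simp only [e1, ← Finset.mul_sum, hm']
      rw [← Finset.sum_mul, hm x, Fintype.card_prod, Finset.prod_insert hpD]
      push_cast; ring

lemma locMean_redp {k : ℕ} (p : ℕ) [Fact p.Prime] (G : ZMod p × (Fin k → ZMod p) → ℝ) :
    LocMean (fun x => G (redp p x)) ((∑ v, G v) / (p:ℝ)^(k+1)) p := by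
  have hp : p.Prime := Fact.out
  constructor
  · intro x v
    have : redp p (x + (p:ℤ) • v) = redp p x := by
      ext <;> simp [redp]
    simp only [this]
  · intro d hd
    have hcard : (Fintype.card (ZMod p × (Fin k → ZMod p)) : ℝ) = (p:ℝ)^(k+1) := by
      simp [ZMod.card, pow_succ, mul_comm]
    refine ⟨ZMod p × (Fin k → ZMod p), inferInstance, inferInstance,
      fun t => ((t.1.val : ℤ), fun i => ((t.2 i).val : ℤ)), ?_, ?_⟩
    · intro t
      have : ∀ a : ZMod p, 0 ≤ (a.val : ℤ) ∧ (a.val : ℤ) ≤ (p:ℤ) - 1 := by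
        intro a
        have := ZMod.val_lt a
        omega
      exact ⟨this _, fun i => this _⟩
    · intro x
      rw [hcard, mul_div_cancel₀]
      swap
      · have := hp.pos; positivity
      have hdu : (d : ZMod p) ≠ 0 := by
        intro h
        rw [ZMod.natCast_eq_zero_iff] at h
        have := Nat.Coprime.eq_one_of_dvd hd.symm h
        exact hp.one_lt.ne' this
      apply Fintype.sum_bijective (fun t => redp p x + (d : ZMod p) • t)
      · constructor
        · intro a b hab
          simp only [add_right_inj] at hab
          exact smul_right_injective _ hdu hab
        · intro y
          refine ⟨(d : ZMod p)⁻¹ • (y - redp p x), ?_⟩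
          simp [smul_smul, hdu]
      · intro t
        have : redp p (x + (d:ℤ) • ((t.1.val : ℤ), fun i => ((t.2 i).val : ℤ)))
            = redp p x + (d : ZMod p) • t := by
          ext <;> simp [redp]
        simp only [this]

lemma Lf_false {k : ℕ} (x : ℤ × (Fin k → ℤ)) : Lf (fun _ => false) x = x.1 := by simp [Lf]

lemma Lf_single {k : ℕ} (x : ℤ × (Fin k → ℤ)) (i : Fin k) :
    Lf (fun j => decide (j = i)) x = x.1 + x.2 i := by
  simp [Lf]

noncomputable def cubeSet (k m : ℕ) : Finset (ℤ × (Fin k → ℤ)) :=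
  ((Finset.Icc (1:ℤ) m) ×ˢ (Fintype.piFinset fun _ : Fin k => Finset.Icc (-(m:ℤ)) m)).filter
    fun x => ∀ ω : Fin k → Bool, 1 ≤ Lf ω x ∧ Lf ω x ≤ m

lemma mem_cubeSet {k m : ℕ} (x : ℤ × (Fin k → ℤ)) :
    x ∈ cubeSet k m ↔ ∀ ω : Fin k → Bool, 1 ≤ Lf ω x ∧ Lf ω x ≤ m := by
  unfold cubeSet
  rw [Finset.mem_filter, and_iff_right_iff_imp]
  intro h
  have h0 := h (fun _ => false)
  rw [Lf_false] at h0
  simp only [Finset.mem_product, Finset.mem_Icc, Fintype.mem_piFinset]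
  refine ⟨h0, fun i => ?_⟩
  have h1 := h (fun j => decide (j = i))
  rw [Lf_single] at h1
  omega

lemma card_cubeSet_le (k m : ℕ) : (cubeSet k m).card ≤ m * (2*m+1)^k := by
  refine (Finset.card_filter_le _ _).trans ?_
  rw [Finset.card_product, Fintype.card_piFinset]
  simp
  apply Nat.mul_le_mul_left
  apply Nat.pow_le_pow_left
  omega

lemma SmallV.Lf_bd {k d : ℕ} {s : ℤ × (Fin k → ℤ)} (hs : SmallV d s) (ω : Fin k → Bool) :
    0 ≤ Lf ω s ∧ Lf ω s ≤ (k+1) * d := by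
  unfold Lf
  have h1 : 0 ≤ ∑ i, (if ω i then s.2 i else 0) := by
    apply Finset.sum_nonneg; intro i _; split_ifs
    · exact (hs.2 i).1
    · rfl
  have h2 : ∑ i, (if ω i then s.2 i else 0) ≤ k * d := by
    have := Finset.sum_le_card_nsmul (Finset.univ : Finset (Fin k))
      (fun i => if ω i then s.2 i else 0) (d:ℤ) (by
        intro i _
        split_ifs
        · linarith [(hs.2 i).2]
        · positivity)
    simpa using this
  constructor <;> linarith [hs.1.1, hs.1.2]

lemma shift_count {k m d : ℕ} (s : ℤ × (Fin k → ℤ)) (hs : SmallV d s) :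
    ((cubeSet k m).filter fun x => x + s ∉ cubeSet k m).card
      ≤ 2^k * (((k+1)*d) * (2*m+1)^k) := by
  have hsub : ((cubeSet k m).filter fun x => x + s ∉ cubeSet k m) ⊆
      (Finset.univ : Finset (Fin k → Bool)).biUnion fun ω =>
        (cubeSet k m).filter fun x => (m:ℤ) - (k+1)*d < Lf ω x := by
    intro x hx
    rw [Finset.mem_filter] at hx
    obtain ⟨hx, hxs⟩ := hx
    rw [mem_cubeSet] at hxs
    push Not at hxs
    obtain ⟨ω, hω⟩ := hxs
    rw [Lf_add] at hω
    have hb := hs.Lf_bd ω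
    have h1 := (mem_cubeSet x).1 hx ω
    have := hω (by linarith)
    rw [Finset.mem_biUnion]
    refine ⟨ω, Finset.mem_univ _, Finset.mem_filter.2 ⟨hx, by linarith⟩⟩
  refine (Finset.card_le_card hsub).trans ?_
  have hc : (2^k : ℕ) = (Finset.univ : Finset (Fin k → Bool)).card := by simp
  rw [hc]
  apply Finset.card_biUnion_le_card_mul
  intro ω _
  calc _ ≤ ((Finset.Ioc ((m:ℤ) - (k+1)*d) m) ×ˢ
        (Fintype.piFinset fun _ : Fin k => Finset.Icc (-(m:ℤ)) m)).card := by
        apply Finset.card_le_card_of_injOn (fun x => (Lf ω x, x.2))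
        · intro x hx
          have hx := Finset.mem_filter.1 hx
          have h1 := (mem_cubeSet x).1 hx.1 ω
          have h2 := (Finset.mem_product.1 (Finset.mem_filter.1 hx.1).1).2
          exact Finset.mem_product.2 ⟨Finset.mem_Ioc.2 ⟨hx.2, h1.2⟩, h2⟩
        · intro x _ y _ hxy
          simp only [Prod.mk.injEq, Lf] at hxy
          obtain ⟨h1, h2⟩ := hxy
          rw [h2] at h1
          exact Prod.ext (add_right_cancel h1) h2
    _ ≤ _ := by
        rw [Finset.card_product, Fintype.card_piFinset]
        simp
        apply Nat.mul_le_mul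
        · have : ((k:ℤ)+1)*d = (((k+1)*d : ℕ):ℤ) := by push_cast; ring
          rw [this]; omega
        · apply Nat.pow_le_pow_left
          omega

lemma equi {k m d : ℕ} (g : ℤ × (Fin k → ℤ) → ℝ) (μ : ℝ) (hg0 : ∀ x, 0 ≤ g x) (hg1 : ∀ x, g x ≤ 1)
    (h : HasMean g μ d) :
    |∑ x ∈ cubeSet k m, g x - (cubeSet k m).card * μ| ≤ 2^k * (((k+1)*d) * (2*m+1)^k) := by
  obtain ⟨T, _, _, s, hs, hm⟩ := h
  set Ω := cubeSet k m with hΩ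
  set B : ℝ := 2^k * (((k+1)*d) * (2*m+1)^k) with hB
  have hT : (0:ℝ) < Fintype.card T := by exact_mod_cast Fintype.card_pos
  have h1 : ∀ t, |∑ x ∈ Ω, g x - ∑ x ∈ Ω, g (x + s t)| ≤ B := by
    intro t
    have hc : (((Ω.filter fun x => x + s t ∉ Ω).card : ℕ) : ℝ) ≤ B := by
      have := shift_count (m := m) (s t) (hs t)
      rw [hB]
      exact_mod_cast this
    set Ω' := Ω.map (Equiv.addRight (s t)).toEmbedding with hΩ'
    have e1 : ∑ x ∈ Ω, g (x + s t) = ∑ y ∈ Ω', g y := by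
      rw [hΩ', Finset.sum_map]; rfl
    have e2 : (Ω' \ Ω).card = (Ω.filter fun x => x + s t ∉ Ω).card := by
      have : Ω' \ Ω = (Ω.filter fun x => x + s t ∉ Ω).map (Equiv.addRight (s t)).toEmbedding := by
        ext y
        simp only [hΩ', Finset.mem_sdiff, Finset.mem_map, Finset.mem_filter]
        constructor
        · rintro ⟨⟨x, hx, rfl⟩, hy⟩
          exact ⟨x, ⟨hx, hy⟩, rfl⟩
        · rintro ⟨x, ⟨hx, hy⟩, rfl⟩
          exact ⟨⟨x, hx, rfl⟩, hy⟩
      rw [this, Finset.card_map]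
    have e3 : (Ω \ Ω').card = (Ω' \ Ω).card := by
      apply Finset.card_sdiff_comm
      rw [hΩ', Finset.card_map]
    have e4 : ∑ x ∈ Ω, g x - ∑ y ∈ Ω', g y = ∑ x ∈ Ω \ Ω', g x - ∑ y ∈ Ω' \ Ω, g y := by
      have a1 := Finset.sum_inter_add_sum_sdiff Ω Ω' g
      have a2 := Finset.sum_inter_add_sum_sdiff Ω' Ω g
      rw [Finset.inter_comm] at a2
      linarith
    have b : ∀ A : Finset (ℤ × (Fin k → ℤ)), 0 ≤ ∑ x ∈ A, g x ∧ ∑ x ∈ A, g x ≤ A.card := by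
      intro A
      refine ⟨Finset.sum_nonneg fun x _ => hg0 x, ?_⟩
      have := Finset.sum_le_card_nsmul A g 1 fun x _ => hg1 x
      simpa using this
    rw [e1, e4, abs_le]
    have b1 := b (Ω \ Ω')
    have b2 := b (Ω' \ Ω)
    rw [e3, e2] at b1
    rw [e2] at b2
    constructor <;> linarith [b1.1, b1.2, b2.1, b2.2]
  have h2 : (Fintype.card T : ℝ) * (∑ x ∈ Ω, g x - Ω.card * μ)
      = ∑ t, (∑ x ∈ Ω, g x - ∑ x ∈ Ω, g (x + s t)) := by
    have e : ∑ t, ∑ x ∈ Ω, g (x + s t) = Ω.card * (Fintype.card T * μ) := by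
      rw [Finset.sum_comm]
      simp only [hm]
      simp
    rw [Finset.sum_sub_distrib, e]
    simp
    ring
  have h3 : (Fintype.card T : ℝ) * |∑ x ∈ Ω, g x - Ω.card * μ| ≤ Fintype.card T * B := by
    rw [← abs_of_pos hT, ← abs_mul, abs_of_pos hT, h2]
    refine (Finset.abs_sum_le_sum_abs _ _).trans ?_
    have := Finset.sum_le_card_nsmul (Finset.univ : Finset T) _ B fun t _ => h1 t
    simpa using this
  exact le_of_mul_le_mul_left h3 hT

section local_density
variable {k p : ℕ} [Fact p.Prime]

lemma card_one (ω : Fin k → Bool) (c : ZMod p) :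
    ∑ v : ZMod p × (Fin k → ZMod p), (if Lf ω v = c then (1:ℝ) else 0) = (p:ℝ)^k := by
  rw [Fintype.sum_prod_type, Finset.sum_comm]
  have : ∀ y : Fin k → ZMod p, ∑ x : ZMod p, (if Lf ω (x, y) = c then (1:ℝ) else 0) = 1 := by
    intro y
    have e : ∀ x : ZMod p, (Lf ω (x, y) = c) ↔ x = c - ∑ i, (if ω i then y i else 0) := by
      intro x
      unfold Lf
      exact eq_sub_iff_add_eq.symm
    simp only [e]
    simp
  simp [this, ZMod.card]

lemma card_two (ω ω' : Fin k → Bool) (hne : ω ≠ ω') (c : ZMod p) :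
    (∑ v : ZMod p × (Fin k → ZMod p), (if Lf ω v = c ∧ Lf ω' v = c then (1:ℝ) else 0)) * p
      ≤ (p:ℝ)^k := by
  obtain ⟨i, hi⟩ := Function.ne_iff.1 hne
  rw [Finset.sum_boole]
  set A := Finset.univ.filter fun v : ZMod p × (Fin k → ZMod p) => Lf ω v = c ∧ Lf ω' v = c with hA
  have hcard : (A ×ˢ (Finset.univ : Finset (ZMod p))).card
      ≤ (Finset.univ : Finset (Fin k → ZMod p)).card := by
    apply Finset.card_le_card_of_injOn (fun q => Function.update q.1.2 i q.2)
    · intro _ _; simp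
    · rintro ⟨v, a⟩ hv ⟨v', a'⟩ hv' h
      simp only at h
      have ha : a = a' := by
        have := congrFun h i
        simpa using this
      have hj : ∀ j, j ≠ i → v.2 j = v'.2 j := by
        intro j hj
        have := congrFun h j
        simpa [hj] using this
      have hv := (Finset.mem_filter.1 (Finset.mem_product.1 hv).1).2
      have hv' := (Finset.mem_filter.1 (Finset.mem_product.1 hv').1).2
      simp only at hv hv'
      set u := v - v' with hu
      have huv : v = u + v' := by simp [hu]
      have hu2 : ∀ j, j ≠ i → u.2 j = 0 := by
        intro j hji
        simp [hu, hj j hji]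
      have hL : ∀ τ : Fin k → Bool, Lf τ u = u.1 + if τ i then u.2 i else 0 := by
        intro τ
        unfold Lf
        congr 1
        apply Finset.sum_eq_single i
        · intro j _ hji; simp [hu2 j hji]
        · simp
      have h1 : Lf ω u = 0 := by
        have := hv.1; rw [huv, Lf_add, hv'.1] at this; simpa using this
      have h2 : Lf ω' u = 0 := by
        have := hv.2; rw [huv, Lf_add, hv'.2] at this; simpa using this
      rw [hL] at h1 h2
      have hu0 : u = 0 := by
        have key : u.1 = 0 ∧ u.2 i = 0 := by
          clear_value u
          cases hω : ω i <;> cases hω' : ω' i <;> rw [hω, hω'] at hi <;>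
            simp only [hω, hω', if_true, Bool.false_eq_true, if_false, add_zero] at h1 h2
          · exact absurd rfl hi
          · refine ⟨h1, ?_⟩; rwa [h1, zero_add] at h2
          · refine ⟨h2, ?_⟩; rwa [h2, zero_add] at h1
          · exact absurd rfl hi
        ext j
        · exact key.1
        · by_cases hji : j = i
          · rw [hji]; exact key.2
          · exact hu2 j hji
      rw [huv, hu0, ha, zero_add]
  rw [Finset.card_product] at hcard
  simp [ZMod.card] at hcard
  exact_mod_cast hcard

noncomputable def Gloc (S : Finset (Fin k → Bool)) (c : ZMod p)
    (v : ZMod p × (Fin k → ZMod p)) : ℝ :=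
  if ∃ ω ∈ S, Lf ω v = c then 1 else 0

lemma Gloc_le (S : Finset (Fin k → Bool)) (c : ZMod p) (v : ZMod p × (Fin k → ZMod p)) :
    Gloc S c v ≤ ∑ ω ∈ S, if Lf ω v = c then (1:ℝ) else 0 := by
  have h0 : ∀ ω ∈ S, (0:ℝ) ≤ if Lf ω v = c then (1:ℝ) else 0 := by
    intro ω _; split_ifs <;> simp
  unfold Gloc
  split_ifs with h
  · obtain ⟨ω, hω, h⟩ := h
    have := Finset.single_le_sum h0 hω
    simpa [h] using this
  · exact Finset.sum_nonneg h0

lemma sum_Gloc_le (S : Finset (Fin k → Bool)) (c : ZMod p) :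
    ∑ v, Gloc S c v ≤ S.card * (p:ℝ)^k := by
  refine (Finset.sum_le_sum fun v _ => Gloc_le S c v).trans ?_
  rw [Finset.sum_comm]
  simp only [card_one]
  simp

lemma le_sum_Gloc (S : Finset (Fin k → Bool)) (c : ZMod p) :
    S.card * (p:ℝ)^(k+1) - (S.card:ℝ)^2 * (p:ℝ)^k ≤ (∑ v, Gloc S c v) * p := by
  induction S using Finset.induction_on with
  | empty => simp [Gloc]
  | insert τ S hτ ih =>
    have hpt : ∀ v : ZMod p × (Fin k → ZMod p), Gloc S c v + (if Lf τ v = c then (1:ℝ) else 0)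
        - ∑ ω ∈ S, (if Lf τ v = c ∧ Lf ω v = c then (1:ℝ) else 0) ≤ Gloc (insert τ S) c v := by
      intro v
      by_cases h : Lf τ v = c
      · have h1 := Gloc_le S c v
        have h2 : Gloc (insert τ S) c v = 1 := by
          unfold Gloc; rw [if_pos]; exact ⟨τ, Finset.mem_insert_self _ _, h⟩
        simp only [h, true_and, if_true, h2]
        linarith
      · have h2 : Gloc (insert τ S) c v = Gloc S c v := by
          unfold Gloc; simp [h]
        simp [h, h2]
    have hs := Finset.sum_le_sum fun v (_ : v ∈ (Finset.univ : Finset (ZMod p × (Fin k → ZMod p))))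
      => hpt v
    rw [Finset.sum_sub_distrib, Finset.sum_add_distrib, card_one, Finset.sum_comm] at hs
    have h2 : (∑ ω ∈ S, ∑ v : ZMod p × (Fin k → ZMod p),
        (if Lf τ v = c ∧ Lf ω v = c then (1:ℝ) else 0)) * p ≤ S.card * (p:ℝ)^k := by
      rw [Finset.sum_mul, ← nsmul_eq_mul]
      apply Finset.sum_le_card_nsmul
      intro ω hω
      apply card_two
      rintro rfl; exact hτ hω
    have hp0 : (0:ℝ) ≤ p := by positivity
    have hs' := mul_le_mul_of_nonneg_right hs hp0
    rw [Finset.card_insert_of_notMem hτ]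
    push_cast
    rw [sub_mul, add_mul, ← pow_succ] at hs'
    have hpk : (0:ℝ) ≤ (p:ℝ)^k := by positivity
    have hS : (0:ℝ) ≤ S.card := by positivity
    nlinarith

noncomputable def rhoL (S : Finset (Fin k → Bool)) (c : ZMod p) : ℝ :=
  (∑ v, Gloc S c v) / (p:ℝ)^(k+1)

lemma rhoL_le (S : Finset (Fin k → Bool)) (c : ZMod p) : rhoL S c ≤ S.card / p := by
  have hp : (0:ℝ) < p := by exact_mod_cast (Fact.out : p.Prime).pos
  unfold rhoL
  rw [div_le_div_iff₀ (by positivity) hp]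
  have := mul_le_mul_of_nonneg_right (sum_Gloc_le S c) hp.le
  rw [pow_succ]; linarith

lemma le_rhoL (S : Finset (Fin k → Bool)) (c : ZMod p) :
    S.card / p - (S.card:ℝ)^2 / (p:ℝ)^2 ≤ rhoL S c := by
  have hp : (0:ℝ) < p := by exact_mod_cast (Fact.out : p.Prime).pos
  unfold rhoL
  have := le_sum_Gloc S c
  rw [le_div_iff₀ (by positivity)]
  have e : (S.card / p - (S.card:ℝ)^2 / (p:ℝ)^2) * (p:ℝ)^(k+1) =
    (S.card * (p:ℝ)^(k+1) - (S.card:ℝ)^2 * (p:ℝ)^k) / p := by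
    field_simp
    ring
  rw [e, div_le_iff₀ hp]
  exact this

lemma Gloc_nonneg (S : Finset (Fin k → Bool)) (c : ZMod p) (v) : 0 ≤ Gloc S c v := by
  unfold Gloc; split_ifs <;> simp

lemma Gloc_le_one (S : Finset (Fin k → Bool)) (c : ZMod p) (v) : Gloc S c v ≤ 1 := by
  unfold Gloc; split_ifs <;> simp

lemma rhoL_nonneg (S : Finset (Fin k → Bool)) (c : ZMod p) : 0 ≤ rhoL S c := by
  unfold rhoL
  have := Finset.sum_nonneg fun v (_ : v ∈ Finset.univ) => Gloc_nonneg S c v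
  positivity

lemma rhoL_le_one (S : Finset (Fin k → Bool)) (c : ZMod p) : rhoL S c ≤ 1 := by
  have hp : (0:ℝ) < p := by exact_mod_cast (Fact.out : p.Prime).pos
  unfold rhoL
  apply div_le_one_of_le₀ _ (by positivity)
  have := Finset.sum_le_card_nsmul (Finset.univ : Finset (ZMod p × (Fin k → ZMod p)))
    (Gloc S c) 1 fun v _ => Gloc_le_one S c v
  refine this.trans (le_of_eq ?_)
  simp [ZMod.card, pow_succ, mul_comm]

end local_density

lemma pow_upper (t : ℝ) (h0 : 0 ≤ t) (h1 : t ≤ 1) (s : ℕ) :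
    (1 - t)^s ≤ 1 - s * t + (s:ℝ)^2 * t^2 := by
  induction s with
  | zero => simp
  | succ s ih =>
    rw [pow_succ]
    have := mul_le_mul_of_nonneg_right ih (sub_nonneg.2 h1)
    refine this.trans ?_
    push_cast
    have hs : (0:ℝ) ≤ s := by positivity
    have a : 0 ≤ (s:ℝ)^2 * t^3 := by positivity
    have b : 0 ≤ (s:ℝ) * t^2 := by positivity
    nlinarith [sq_nonneg t]

lemma beta_bound (t ρ : ℝ) (h0 : 0 ≤ t) (h1 : t ≤ 1/2) (s K : ℕ) (hsK : s ≤ K)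
    (hr1 : ρ ≤ s * t) (hr2 : s * t - (s:ℝ)^2 * t^2 ≤ ρ) :
    |(1 - ρ) / (1 - t)^s - 1| ≤ (2^K * (K:ℝ)^2) * t^2 := by
  have hl : 1 - s * t ≤ (1 - t)^s := by
    have := one_add_mul_le_pow (a := -t) (by linarith) s
    rw [← sub_eq_add_neg] at this
    linarith
  have hu := pow_upper t h0 (by linarith) s
  have hpos : 0 < (1-t)^s := by apply pow_pos; linarith
  have hhalf : (1/2:ℝ)^s ≤ (1-t)^s := by apply pow_le_pow_left₀ <;> linarith
  have e : (1 - ρ) / (1 - t)^s - 1 = ((1 - ρ) - (1-t)^s) / (1-t)^s := by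
    field_simp
  rw [e, abs_div, abs_of_pos hpos, div_le_iff₀ hpos]
  have h3 : |(1 - ρ) - (1-t)^s| ≤ (s:ℝ)^2 * t^2 := by
    rw [abs_le]; constructor <;> linarith
  refine h3.trans ?_
  have h4 : (1:ℝ) ≤ 2^K * (1-t)^s := by
    calc (1:ℝ) = 2^s * (1/2)^s := by rw [← mul_pow]; norm_num
      _ ≤ 2^K * (1-t)^s := by
        gcongr
        norm_num
  have h5 : (s:ℝ)^2 * t^2 ≤ (K:ℝ)^2 * t^2 := by gcongr
  have h6 : 0 ≤ (K:ℝ)^2 * t^2 := by positivity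
  nlinarith

noncomputable def gS {k : ℕ} (S : Finset (Fin k → Bool)) (W b : ℕ) (p : ℕ)
    (x : ℤ × (Fin k → ℤ)) : ℝ :=
  if ∃ ω ∈ S, (p:ℤ) ∣ (W:ℤ) * Lf ω x + b then 1 else 0

noncomputable def rhoP {k : ℕ} (S : Finset (Fin k → Bool)) (W b : ℕ) (p : ℕ) : ℝ :=
  if h : p.Prime then
    haveI : Fact p.Prime := ⟨h⟩
    rhoL (k := k) S (-(b : ZMod p) / (W : ZMod p)) else 0

lemma locMean_gS {k : ℕ} (S : Finset (Fin k → Bool)) (W b p : ℕ) (hp : p.Prime)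
    (hW : Nat.Coprime W p) : LocMean (gS S W b p) (rhoP S W b p) p := by
  have : Fact p.Prime := ⟨hp⟩
  have hWu : (W : ZMod p) ≠ 0 := by
    intro h
    rw [ZMod.natCast_eq_zero_iff] at h
    exact hp.one_lt.ne' (Nat.Coprime.eq_one_of_dvd hW.symm h)
  have h1 : gS S W b p = fun x => Gloc S (-(b : ZMod p) / (W : ZMod p)) (redp p x) := by
    funext x
    unfold gS Gloc
    have : ∀ ω, ((p:ℤ) ∣ (W:ℤ) * Lf ω x + b) ↔
        Lf ω (redp p x) = -(b : ZMod p) / (W : ZMod p) := by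
      intro ω
      rw [Lf_redp, ← ZMod.intCast_zmod_eq_zero_iff_dvd, eq_div_iff hWu, eq_neg_iff_add_eq_zero]
      push_cast
      rw [mul_comm]
    simp only [this]
  have h2 : rhoP S W b p = (∑ v, Gloc S (-(b : ZMod p) / (W : ZMod p)) v) / (p:ℝ)^(k+1) := by
    unfold rhoP rhoL
    rw [dif_pos hp]
  rw [h1, h2]
  exact locMean_redp p _

noncomputable def nuF (P : Finset ℕ) (W b : ℕ) (n : ℤ) : ℝ :=
  ∏ p ∈ P, if (p:ℤ) ∣ (W:ℤ) * n + b then 0 else (p:ℝ) / ((p:ℝ) - 1)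

lemma prod_nuF {k : ℕ} (S : Finset (Fin k → Bool)) (P : Finset ℕ) (W b : ℕ)
    (x : ℤ × (Fin k → ℤ)) :
    ∏ ω ∈ S, nuF P W b (Lf ω x) =
      (∏ p ∈ P, ((p:ℝ) / ((p:ℝ) - 1))^S.card) * ∏ p ∈ P, (1 - gS S W b p x) := by
  unfold nuF
  rw [Finset.prod_comm, ← Finset.prod_mul_distrib]
  apply Finset.prod_congr rfl
  intro p _
  unfold gS
  split_ifs with h
  · obtain ⟨ω, hω, h⟩ := h
    rw [sub_self, mul_zero]
    apply Finset.prod_eq_zero hω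
    simp [h]
  · push Not at h
    rw [sub_zero, mul_one, ← Finset.prod_const]
    apply Finset.prod_congr rfl
    intro ω hω
    rw [if_neg (h ω hω)]

lemma main_sum {k m r W b K : ℕ} (hK : K = 2^k) (S : Finset (Fin k → Bool)) (P : Finset ℕ)
    (Z lam eta : ℝ)
    (hp : ∀ p ∈ P, p.Prime) (hW : ∀ p ∈ P, Nat.Coprime W p) (hZ : 1 ≤ Z)
    (hPZ : ∀ p ∈ P, (p:ℝ) ≤ Z) (hcard : (P.card : ℝ) ≤ Z)
    (hlam : ∑ p ∈ P, (1:ℝ) / p ≤ lam) (heta : ∑ p ∈ P, ((p:ℝ)^2)⁻¹ ≤ eta) :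
    |∑ x ∈ cubeSet k m, ∏ ω ∈ S, nuF P W b (Lf ω x) - (cubeSet k m).card| ≤
      Real.exp (2 * K * lam) * ((((r:ℝ)+1) * Z^r) * (2^k * (((k+1) * Z^r) * (2*m+1)^k))
        + 2 * (cubeSet k m).card * ((1/2)^r * Real.exp (2 * K * lam)))
      + (cubeSet k m).card * (Real.exp (2^K * (K:ℝ)^2 * eta) - 1) := by
  set Ω := cubeSet k m with hΩ
  set ρ := rhoP S W b with hρ
  set s := S.card with hs
  have hsK : s ≤ K := by
    have := Finset.card_le_univ S
    rw [hK]; simpa using this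
  have hsK' : (s:ℝ) ≤ K := by exact_mod_cast hsK
  have hp0 : ∀ p ∈ P, (0:ℝ) < p := fun p h => by exact_mod_cast (hp p h).pos
  have hp2 : ∀ p ∈ P, (2:ℝ) ≤ p := fun p h => by exact_mod_cast (hp p h).two_le
  have hr0 : ∀ p ∈ P, 0 ≤ ρ p := by
    intro p h
    have : Fact p.Prime := ⟨hp p h⟩
    simp only [hρ, rhoP, dif_pos (hp p h)]
    exact rhoL_nonneg _ _
  have hr1 : ∀ p ∈ P, ρ p ≤ 1 := by
    intro p h
    have : Fact p.Prime := ⟨hp p h⟩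
    simp only [hρ, rhoP, dif_pos (hp p h)]
    exact rhoL_le_one _ _
  have hru : ∀ p ∈ P, ρ p ≤ s / p := by
    intro p h
    have : Fact p.Prime := ⟨hp p h⟩
    simp only [hρ, rhoP, dif_pos (hp p h)]
    exact rhoL_le _ _
  have hrl : ∀ p ∈ P, s / p - (s:ℝ)^2 / (p:ℝ)^2 ≤ ρ p := by
    intro p h
    have : Fact p.Prime := ⟨hp p h⟩
    simp only [hρ, rhoP, dif_pos (hp p h)]
    exact le_rhoL _ _
  have hg0 : ∀ p x, 0 ≤ gS S W b p x := by intro p x; unfold gS; split_ifs <;> simp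
  have hg1 : ∀ p x, gS S W b p x ≤ 1 := by intro p x; unfold gS; split_ifs <;> simp
  have hlam0 : 0 ≤ lam := le_trans (Finset.sum_nonneg fun p h => by positivity) hlam
  -- sieve
  have hB : ∀ D ⊆ P, D.card ≤ r → |∑ x ∈ Ω, ∏ p ∈ D, gS S W b p x - Ω.card * ∏ p ∈ D, ρ p|
      ≤ 2^k * (((k+1) * Z^r) * (2*m+1)^k) := by
    intro D hD hDr
    have hm := hasMean_prod (gS S W b) ρ D (fun p h => hp p (hD h))
      (fun p h => locMean_gS S W b p (hp p (hD h)) (hW p (hD h)))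
    have := equi (m := m) _ _ (fun x => Finset.prod_nonneg fun p _ => hg0 p x)
      (fun x => Finset.prod_le_one (fun p _ => hg0 p x) fun p _ => hg1 p x) hm
    refine this.trans ?_
    have hd : ((∏ p ∈ D, p : ℕ) : ℝ) ≤ Z^r := by
      push_cast
      calc ∏ p ∈ D, (p:ℝ) ≤ ∏ p ∈ D, Z :=
            Finset.prod_le_prod (fun p _ => by positivity) fun p h => hPZ p (hD h)
        _ = Z^D.card := by simp
        _ ≤ Z^r := pow_le_pow_right₀ hZ hDr
    gcongr
  have hsv := sieve Ω (gS S W b) ρ P r _ hg0 hg1 hr0 hr1 hB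
  have hch : ∑ j ∈ Finset.range (r+1), (P.card.choose j : ℝ) ≤ ((r:ℝ)+1) * Z^r := by
    have := Finset.sum_le_card_nsmul (Finset.range (r+1)) (fun j => (P.card.choose j : ℝ)) (Z^r) (by
      intro j hj
      have hj : j ≤ r := by rw [Finset.mem_range] at hj; omega
      have h1 : (P.card.choose j : ℝ) ≤ (P.card:ℝ)^j := by exact_mod_cast Nat.choose_le_pow _ _
      calc _ ≤ (P.card:ℝ)^j := h1
        _ ≤ Z^j := by gcongr
        _ ≤ Z^r := pow_le_pow_right₀ hZ hj)
    simpa using this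
  have hes : esy ρ r P ≤ (1/2)^r * Real.exp (2 * K * lam) := by
    refine (esy_le ρ P hr0 r).trans ?_
    have : ∑ p ∈ P, ρ p ≤ K * lam := by
      calc ∑ p ∈ P, ρ p ≤ ∑ p ∈ P, s * ((1:ℝ)/p) := by
            apply Finset.sum_le_sum; intro p h
            rw [mul_one_div]; exact hru p h
        _ ≤ K * lam := by
            rw [← Finset.mul_sum]
            gcongr
    have h2 : 2 * ∑ p ∈ P, ρ p ≤ 2 * K * lam := by linarith
    gcongr
  -- V
  set Y := ∏ p ∈ P, ((p:ℝ) / ((p:ℝ) - 1))^s with hY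
  have hY0 : 0 ≤ Y := Finset.prod_nonneg fun p h => by
    have := hp2 p h
    apply pow_nonneg; apply div_nonneg <;> linarith
  have hYle : Y ≤ Real.exp (2 * K * lam) := by
    calc Y ≤ ∏ p ∈ P, Real.exp (2 * K * ((1:ℝ)/p)) := by
          apply Finset.prod_le_prod
          · intro p h
            have := hp2 p h
            apply pow_nonneg; apply div_nonneg <;> linarith
          · intro p h
            have h2 := hp2 p h
            have h3 := hp0 p h
            have : (p:ℝ) / (p - 1) ≤ Real.exp (2 * (1/p)) := by
              refine le_trans ?_ (Real.add_one_le_exp _)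
              rw [div_le_iff₀ (by linarith)]
              have : (2 * (1/(p:ℝ)) + 1) * (p - 1) = p + (1 - 2/p) := by field_simp; ring
              rw [this]
              have : 2/(p:ℝ) ≤ 1 := by rw [div_le_one h3]; exact h2
              linarith
            calc ((p:ℝ) / (p - 1))^s ≤ (Real.exp (2 * (1/p)))^s := by
                  apply pow_le_pow_left₀ _ this
                  apply div_nonneg <;> linarith
              _ ≤ (Real.exp (2 * (1/p)))^K := by
                  apply pow_le_pow_right₀ _ hsK
                  apply Real.one_le_exp; positivity
              _ = _ := by rw [← Real.exp_nat_mul]; congr 1; ring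
      _ = Real.exp (2 * K * ∑ p ∈ P, (1:ℝ)/p) := by
          rw [← Real.exp_sum, Finset.mul_sum]
      _ ≤ _ := by gcongr
  -- beta
  set β := fun p : ℕ => ((p:ℝ) / ((p:ℝ) - 1))^s * (1 - ρ p) with hβ
  have hβb : |∏ p ∈ P, β p - 1| ≤ Real.exp (2^K * (K:ℝ)^2 * eta) - 1 := by
    have h1 := Finset.norm_prod_one_add_sub_one_le P (fun p => β p - 1)
    simp only [add_sub_cancel, Real.norm_eq_abs] at h1
    refine h1.trans ?_
    have : ∑ p ∈ P, |β p - 1| ≤ 2^K * (K:ℝ)^2 * eta := by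
      calc ∑ p ∈ P, |β p - 1| ≤ ∑ p ∈ P, 2^K * (K:ℝ)^2 * ((p:ℝ)^2)⁻¹ := by
            apply Finset.sum_le_sum
            intro p h
            have h2 := hp2 p h
            have h3 := hp0 p h
            have hb := beta_bound (1/p) (ρ p) (by positivity)
              (by rw [div_le_div_iff₀ h3 (by norm_num)]; linarith) s K hsK
              (by have := hru p h; rw [mul_one_div]; exact this)
              (by have := hrl p h; rw [mul_one_div, one_div, inv_pow, ← div_eq_mul_inv]; exact this)
            have e : (1 - ρ p) / (1 - 1/(p:ℝ))^s = β p := by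
              have hne : (p:ℝ) - 1 ≠ 0 := by linarith
              have : (p:ℝ) / (p - 1) = (1 - 1/(p:ℝ))⁻¹ := by
                rw [one_sub_div h3.ne', inv_div]
              simp only [hβ]
              rw [this, inv_pow, div_eq_mul_inv, mul_comm]
            rw [e] at hb
            simpa using hb
        _ ≤ _ := by
            rw [← Finset.mul_sum]; gcongr
    gcongr
  have hβY : Y * ∏ p ∈ P, (1 - ρ p) = ∏ p ∈ P, β p := by
    rw [hY, ← Finset.prod_mul_distrib]
  simp only [prod_nuF]
  rw [← Finset.mul_sum, ← hs, ← hY]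
  have hsplit : Y * ∑ x ∈ Ω, ∏ p ∈ P, (1 - gS S W b p x) - Ω.card
      = Y * (∑ x ∈ Ω, ∏ p ∈ P, (1 - gS S W b p x) - Ω.card * ∏ p ∈ P, (1 - ρ p))
        + Ω.card * (∏ p ∈ P, β p - 1) := by
    rw [← hβY]; ring
  rw [hsplit]
  refine (abs_add_le _ _).trans ?_
  rw [abs_mul, abs_mul, Nat.abs_cast, abs_of_nonneg hY0]
  have hZ0 : 0 ≤ Z := by linarith
  gcongr
  refine hsv.trans ?_
  gcongr

lemma conj_iter (j : ℕ) (a : ℝ) : (⇑(starRingEnd ℂ))^[j] (a : ℂ) = a := by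
  induction j with
  | zero => rfl
  | succ j ih => rw [Function.iterate_succ_apply', ih, Complex.conj_ofReal]

lemma le_floor_aux (M : ℝ) (n : ℤ) (h : 1 ≤ n) : (n:ℝ) ≤ M ↔ n ≤ (⌊M⌋₊ : ℤ) := by
  lift n to ℕ using by omega
  have : n ≠ 0 := by omega
  rw [Nat.cast_le, Nat.le_floor_iff' this]
  simp

lemma gowers_sum (k : ℕ) (M : ℝ) (f : ℤ → ℂ) (g : ℤ → ℝ) (hfg : ∀ n, f n = (g n : ℂ)) :
    ∑' nh : ℤ × (Fin k → ℤ), gowersProd k (truncN M f) nh.1 nh.2 =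
      ((∑ x ∈ cubeSet k ⌊M⌋₊, ∏ ω, g (Lf ω x) : ℝ) : ℂ) := by
  have htr : truncN M f = fun n => (((if 1 ≤ n ∧ n ≤ (⌊M⌋₊ : ℤ) then g n else 0 : ℝ)) : ℂ) := by
    funext n
    unfold truncN
    by_cases h : 1 ≤ n
    · simp only [h, true_and, le_floor_aux M n h]
      split_ifs
      · exact hfg n
      · simp
    · simp [h]
  have hprod : ∀ x : ℤ × (Fin k → ℤ), gowersProd k (truncN M f) x.1 x.2 =
      ((∏ ω : Fin k → Bool,
        (if 1 ≤ Lf ω x ∧ Lf ω x ≤ (⌊M⌋₊ : ℤ) then g (Lf ω x) else 0) : ℝ) : ℂ) := by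
    intro x
    unfold gowersProd
    rw [htr, Complex.ofReal_prod]
    apply Finset.prod_congr rfl
    intro ω _
    rw [conj_iter]
    rfl
  rw [tsum_eq_sum (s := cubeSet k ⌊M⌋₊), Complex.ofReal_sum]
  · apply Finset.sum_congr rfl
    intro x hx
    rw [hprod]
    congr 1
    apply Finset.prod_congr rfl
    intro ω _
    rw [if_pos ((mem_cubeSet x).1 hx ω)]
  · intro x hx
    rw [mem_cubeSet] at hx
    rw [not_forall] at hx
    obtain ⟨ω, hω⟩ := hx
    rw [hprod, Finset.prod_eq_zero (Finset.mem_univ ω)]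
    · simp
    · rw [if_neg hω]

lemma gowers_diff {k : ℕ} (Ω : Finset (ℤ × (Fin k → ℤ))) (ν : ℤ → ℝ) (E : ℝ)
    (h : ∀ S : Finset (Fin k → Bool), |∑ x ∈ Ω, ∏ ω ∈ S, ν (Lf ω x) - Ω.card| ≤ E) :
    |∑ x ∈ Ω, ∏ ω, (ν (Lf ω x) - 1)| ≤ 2^(2^k) * E := by
  have h0 : ∑ S ∈ (Finset.univ : Finset (Fin k → Bool)).powerset,
      (∏ ω ∈ S, (1:ℝ)) * ∏ ω ∈ Finset.univ \ S, (-1:ℝ) = 0 := by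
    rw [← Finset.prod_add]
    simp
  have h1 : ∑ x ∈ Ω, ∏ ω, (ν (Lf ω x) - 1) =
      ∑ S ∈ (Finset.univ : Finset (Fin k → Bool)).powerset,
        (∏ ω ∈ Finset.univ \ S, (-1:ℝ)) * (∑ x ∈ Ω, ∏ ω ∈ S, ν (Lf ω x) - Ω.card) := by
    simp only [sub_eq_add_neg (_ : ℝ) 1, Finset.prod_add]
    rw [Finset.sum_comm]
    simp only [Finset.prod_const_one, one_mul] at h0
    simp only [mul_sub, Finset.sum_sub_distrib, ← Finset.sum_mul, h0, zero_mul, sub_zero]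
    apply Finset.sum_congr rfl
    intro S _
    rw [mul_comm]
  rw [h1]
  refine (Finset.abs_sum_le_sum_abs _ _).trans ?_
  have := Finset.sum_le_card_nsmul (Finset.univ : Finset (Fin k → Bool)).powerset
    (fun S => |(∏ ω ∈ Finset.univ \ S, (-1:ℝ)) * (∑ x ∈ Ω, ∏ ω ∈ S, ν (Lf ω x) - Ω.card)|) E (by
      intro S _
      rw [abs_mul, Finset.abs_prod]
      simpa using h S)
  refine this.trans (le_of_eq ?_)
  rw [Finset.card_powerset]
  simp

lemma card_cubeSet_ge (k m : ℕ) : (m / (k+1))^(k+1) ≤ (cubeSet k m).card := by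
  set q := m / (k+1) with hq
  have hqm : (k+1) * q ≤ m := Nat.mul_div_le m (k+1)
  have : (q)^(k+1) = ((Finset.Icc (1:ℤ) q) ×ˢ
      (Fintype.piFinset fun _ : Fin k => Finset.Ico (0:ℤ) q)).card := by
    rw [Finset.card_product, Fintype.card_piFinset]
    simp [pow_succ, mul_comm]
  rw [this]
  apply Finset.card_le_card
  intro x hx
  simp only [Finset.mem_product, Finset.mem_Icc, Fintype.mem_piFinset, Finset.mem_Ico] at hx
  rw [mem_cubeSet]
  intro ω
  have hs : SmallV q (x.1 - 1, x.2) := by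
    refine ⟨⟨?_, ?_⟩, fun i => ⟨(hx.2 i).1, ?_⟩⟩
    · simp; linarith [hx.1.1]
    · simp; linarith [hx.1.2]
    · have := (hx.2 i).2; simp; omega
  have h1 : 0 ≤ ∑ i, (if ω i then x.2 i else 0) := by
    apply Finset.sum_nonneg; intro i _; split_ifs
    · exact (hx.2 i).1
    · rfl
  have h2 : ∑ i, (if ω i then x.2 i else 0) ≤ k * q := by
    have := Finset.sum_le_card_nsmul (Finset.univ : Finset (Fin k))
      (fun i => if ω i then x.2 i else 0) (q:ℤ) (by
        intro i _
        split_ifs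
        · linarith [(hx.2 i).2]
        · positivity)
    simpa using this
  have h3 : ((k:ℤ)+1) * q ≤ m := by exact_mod_cast hqm
  unfold Lf
  constructor
  · linarith [hx.1.1]
  · linarith [hx.1.2]

lemma gowersUN_le (k : ℕ) (M : ℝ) (f : ℤ → ℂ) (ν : ℤ → ℝ) (hf : ∀ n, f n = ((ν n - 1 : ℝ) : ℂ))
    (E : ℝ) (hpos : 0 < (cubeSet k ⌊M⌋₊).card)
    (h : ∀ S : Finset (Fin k → Bool),
      |∑ x ∈ cubeSet k ⌊M⌋₊, ∏ ω ∈ S, ν (Lf ω x) - (cubeSet k ⌊M⌋₊).card|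
        ≤ (cubeSet k ⌊M⌋₊).card * E) :
    gowersUN k M f ≤ (2^(2^k) * E)^((1:ℝ)/2^k) := by
  unfold gowersUN gowersTildeU
  rw [gowers_sum k M f (fun n => ν n - 1) hf,
    gowers_sum k M (fun _ => 1) (fun _ => 1) (fun _ => by simp)]
  simp only [Finset.prod_const_one, Complex.ofReal_re]
  have hd := gowers_diff _ ν _ h
  set Ω := cubeSet k ⌊M⌋₊
  have hΩ : (0:ℝ) < Ω.card := by exact_mod_cast hpos
  simp only [Finset.sum_const, nsmul_eq_mul, mul_one]
  set X := ∑ x ∈ Ω, ∏ ω, (ν (Lf ω x) - 1)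
  have h1 : X ^ ((1:ℝ)/2^k) ≤ |X| ^ ((1:ℝ)/2^k) :=
    (le_abs_self _).trans (Real.abs_rpow_le_abs_rpow _ _)
  have hE : 0 ≤ 2^(2^k) * E := by
    have : 0 ≤ (Ω.card:ℝ) * E := (abs_nonneg _).trans (h ∅)
    have : 0 ≤ E := nonneg_of_mul_nonneg_right this hΩ
    positivity
  rw [div_le_iff₀ (by positivity), ← Real.mul_rpow hE hΩ.le]
  refine h1.trans ?_
  apply Real.rpow_le_rpow (abs_nonneg _) _ (by positivity)
  linarith

noncomputable def Pset (w z : ℝ) : Finset ℕ :=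
  (Finset.range (⌈z⌉₊ + 1)).filter fun p => (Nat.Prime p ∧ (p : ℝ) < z) ∧ ¬ ((p:ℝ) < w)

lemma mem_Pset {w z : ℝ} {p : ℕ} (h : p ∈ Pset w z) : p.Prime ∧ w ≤ p ∧ (p:ℝ) < z := by
  have := (Finset.mem_filter.1 h).2
  exact ⟨this.1.1, not_lt.1 this.2, this.1.2⟩

noncomputable def Pfin (z : ℝ) : Finset ℕ :=
  (Finset.range (⌈z⌉₊ + 1)).filter fun p => Nat.Prime p ∧ (p : ℝ) < z

lemma mem_Pfin {z : ℝ} {p : ℕ} : p ∈ Pfin z ↔ p.Prime ∧ (p:ℝ) < z := by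
  unfold Pfin
  rw [Finset.mem_filter, and_iff_right_iff_imp, Finset.mem_range]
  intro h
  have := Nat.lt_ceil.2 h.2
  omega

lemma coprime_Pset {w z : ℝ} {p : ℕ} (h : p ∈ Pset w z) : Nat.Coprime (primorialLT w) p := by
  unfold primorialLT
  apply Nat.Coprime.prod_left
  intro q hq
  have hq := (Finset.mem_filter.1 hq).2
  have hp := mem_Pset h
  rw [Nat.coprime_primes hq.1 hp.1]
  rintro rfl
  linarith [hp.2.1, hq.2]

lemma cramer_eq {w z : ℝ} (hwz : w ≤ z) (W b : ℕ) (hW : W = primorialLT w) (hb : Nat.gcd b W = 1)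
    (n : ℤ) : (Nat.totient W : ℝ) / W * cramer z ((W:ℤ) * n + b) = nuF (Pset w z) W b n := by
  have hWP : W = ∏ p ∈ Pfin w, p := hW
  have hpr : ∀ p ∈ Pfin w, p.Prime := fun p h => (mem_Pfin.1 h).1
  have hW0 : W ≠ 0 := by
    rw [hWP, Finset.prod_ne_zero_iff]; exact fun p h => (hpr p h).ne_zero
  have htot : (Nat.totient W : ℝ) = W * ∏ p ∈ Pfin w, (1 - (p:ℝ)⁻¹) := by
    have h1 := Nat.totient_eq_mul_prod_factors W
    have h2 : W.primeFactors = Pfin w := by rw [hWP]; exact Nat.primeFactors_prod hpr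
    rw [h2] at h1
    have h3 := congrArg (Rat.cast : ℚ → ℝ) h1
    push_cast at h3
    exact h3
  have hsplit : cramer z ((W:ℤ) * n + b) =
      (∏ p ∈ Pfin w, if (p:ℤ) ∣ (W:ℤ) * n + b then 0 else (p:ℝ) / ((p:ℝ) - 1))
        * nuF (Pset w z) W b n := by
    unfold cramer nuF
    rw [← Finset.prod_filter_mul_prod_filter_not _ (fun p : ℕ => (p:ℝ) < w)]
    congr 1
    · apply Finset.prod_congr _ (fun _ _ => rfl)
      ext p
      rw [Finset.mem_filter, mem_Pfin]
      have := mem_Pfin (z := z) (p := p)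
      unfold Pfin at this
      rw [this]
      constructor
      · rintro ⟨⟨a, _⟩, c⟩; exact ⟨a, c⟩
      · rintro ⟨a, c⟩; exact ⟨⟨a, by linarith⟩, c⟩
    · apply Finset.prod_congr _ (fun _ _ => rfl)
      unfold Pset
      rw [Finset.filter_filter]
  have hnd : ∀ p ∈ Pfin w, (if (p:ℤ) ∣ (W:ℤ) * n + b then 0 else (p:ℝ) / ((p:ℝ) - 1))
      = (1 - (p:ℝ)⁻¹)⁻¹ := by
    intro p h
    have hpW : p ∣ W := by rw [hWP]; exact Finset.dvd_prod_of_mem _ h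
    have hnd : ¬ (p:ℤ) ∣ (W:ℤ) * n + b := by
      intro hd
      have h1 : (p:ℤ) ∣ (W:ℤ) * n := Dvd.dvd.mul_right (by exact_mod_cast hpW) _
      have h2 : (p:ℤ) ∣ b := (Int.dvd_add_right h1).1 hd
      have h3 : p ∣ b := by exact_mod_cast h2
      have := Nat.dvd_gcd h3 hpW
      rw [hb] at this
      exact (hpr p h).one_lt.ne' (Nat.dvd_one.1 this)
    rw [if_neg hnd]
    have : (p:ℝ) ≠ 0 := by exact_mod_cast (hpr p h).ne_zero
    rw [← one_div (p:ℝ), one_sub_div this, inv_div]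
  rw [hsplit, Finset.prod_congr rfl hnd, htot, Finset.prod_inv_distrib, ← mul_assoc]
  have hne : ∏ p ∈ Pfin w, (1 - (p:ℝ)⁻¹) ≠ 0 := by
    rw [Finset.prod_ne_zero_iff]
    intro p h
    have : (1:ℝ) < p := by exact_mod_cast (hpr p h).one_lt
    have := inv_lt_one_of_one_lt₀ this
    linarith
  have hW0' : (W:ℝ) ≠ 0 := by exact_mod_cast hW0
  rw [mul_div_cancel_left₀ _ hW0', mul_inv_cancel₀ hne, one_mul]

lemma Pset_card {w z : ℝ} (hz : 0 ≤ z) : ((Pset w z).card : ℝ) ≤ z := by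
  have : Pset w z ⊆ Finset.Icc 1 ⌊z⌋₊ := by
    intro p hp
    have := mem_Pset hp
    rw [Finset.mem_Icc]
    exact ⟨this.1.pos, Nat.le_floor this.2.2.le⟩
  have h := Finset.card_le_card this
  rw [Nat.card_Icc] at h
  calc ((Pset w z).card : ℝ) ≤ (⌊z⌋₊ : ℝ) := by exact_mod_cast h
    _ ≤ z := Nat.floor_le hz

lemma Pset_harm {w z : ℝ} (hz : 1 ≤ z) : ∑ p ∈ Pset w z, (1:ℝ)/p ≤ 1 + Real.log z := by
  have : Pset w z ⊆ Finset.Icc 1 ⌊z⌋₊ := by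
    intro p hp
    have := mem_Pset hp
    rw [Finset.mem_Icc]
    exact ⟨this.1.pos, Nat.le_floor this.2.2.le⟩
  refine (Finset.sum_le_sum_of_subset_of_nonneg this fun _ _ _ => by positivity).trans ?_
  refine le_trans (le_of_eq ?_) (harmonic_floor_le_one_add_log z hz)
  rw [harmonic_eq_sum_Icc]
  push_cast
  simp

lemma Pset_sq {w z : ℝ} (hw : 2 ≤ w) : ∑ p ∈ Pset w z, ((p:ℝ)^2)⁻¹ ≤ 2 / w := by
  have hc : 2 ≤ ⌈w⌉₊ := by
    have := Nat.le_ceil w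
    have : (2:ℝ) ≤ ⌈w⌉₊ := by linarith
    exact_mod_cast this
  have : Pset w z ⊆ Finset.Ioo (⌈w⌉₊ - 1) (⌈z⌉₊ + 1) := by
    intro p hp
    have hp' := mem_Pset hp
    rw [Finset.mem_Ioo]
    have h1 := Nat.ceil_le.2 hp'.2.1
    have h2 := Finset.mem_range.1 (Finset.mem_filter.1 hp).1
    omega
  refine (Finset.sum_le_sum_of_subset_of_nonneg this fun _ _ _ => by positivity).trans ?_
  refine (sum_Ioo_inv_sq_le _ _).trans ?_
  have e : ((⌈w⌉₊ - 1 : ℕ) : ℝ) + 1 = ⌈w⌉₊ := by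
    rw [Nat.cast_sub (by omega)]; simp
  rw [e]
  have := Nat.le_ceil w
  gcongr

lemma card_cubeSet_real (k m : ℕ) (hm : k + 1 ≤ m) :
    (m:ℝ)^(k+1) ≤ (2*((k:ℝ)+1))^(k+1) * (cubeSet k m).card := by
  have h1 := card_cubeSet_ge k m
  have h2 : m ≤ 2 * (k+1) * (m/(k+1)) := by
    have h3 := Nat.div_add_mod m (k+1)
    have h4 := Nat.mod_lt m (Nat.succ_pos k)
    have h5 : 1 ≤ m/(k+1) := (Nat.one_le_div_iff (Nat.succ_pos k)).2 hm
    simp only [Nat.succ_eq_add_one] at h4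
    nlinarith
  calc (m:ℝ)^(k+1) ≤ (2 * ((k:ℝ)+1) * ((m/(k+1) : ℕ):ℝ))^(k+1) := by
        gcongr
        exact_mod_cast h2
    _ = (2*((k:ℝ)+1))^(k+1) * ((m/(k+1) : ℕ):ℝ)^(k+1) := by rw [mul_pow]
    _ ≤ _ := by
        gcongr
        exact_mod_cast h1

lemma numeric1 (C2 K u : ℝ) (r : ℕ) (hC : 1 ≤ C2) (hK : 1 ≤ K) (hu : C2 + 16 * K + 10 ≤ u)
    (hr : (r:ℝ) ≤ u^2 + 1) :
    C2 * Real.exp (2 * K * (1+u)) * ((r:ℝ)+1) * (Real.exp u ^ r * Real.exp u ^ r)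
      ≤ Real.exp (u^4) * (1/u) := by
  have hu0 : 0 < u := by linarith
  have a1 : C2 ≤ Real.exp C2 := by linarith [Real.add_one_le_exp C2]
  have a2 : (r:ℝ)+1 ≤ Real.exp (u^2+1) := by linarith [Real.add_one_le_exp (u^2+1)]
  have a3 : Real.exp u ^ r * Real.exp u ^ r ≤ Real.exp (2 * u * (u^2+1)) := by
    rw [← Real.exp_nat_mul, ← Real.exp_add]
    apply Real.exp_le_exp.2
    nlinarith
  have a4 : Real.exp (-u) ≤ 1/u := by
    rw [Real.exp_neg, ← one_div]
    apply one_div_le_one_div_of_le hu0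
    linarith [Real.add_one_le_exp u]
  calc _ ≤ Real.exp C2 * Real.exp (2 * K * (1+u)) * Real.exp (u^2+1)
          * Real.exp (2 * u * (u^2+1)) := by gcongr
    _ = Real.exp (C2 + 2 * K * (1+u) + (u^2+1) + 2 * u * (u^2+1)) := by
        rw [← Real.exp_add, ← Real.exp_add, ← Real.exp_add]
    _ ≤ Real.exp (u^4 + (-u)) := by
        apply Real.exp_le_exp.2
        have b1 : 2 * K * (1+u) ≤ u^2 := by nlinarith
        have b2 : 10 ≤ u := by linarith
        have b3 : 10 * u ≤ u^2 := by nlinarith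
        have b4 : 10 * u^2 ≤ u^3 := by nlinarith
        have b5 : 10 * u^3 ≤ u^4 := by nlinarith [pow_pos hu0 3]
        nlinarith
    _ ≤ _ := by rw [Real.exp_add]; gcongr

lemma numeric2 (K u : ℝ) (r : ℕ) (hK : 1 ≤ K) (hu : 16 * K + 10 ≤ u) (hr : u^2 ≤ r) :
    Real.exp (2 * K * (1+u)) * (2 * ((1/2)^r * Real.exp (2 * K * (1+u)))) ≤ 1/u := by
  have hu0 : 0 < u := by linarith
  have a1 : (2:ℝ) ≤ Real.exp 1 := by linarith [Real.add_one_le_exp (1:ℝ)]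
  have a2 : (1/2:ℝ)^r ≤ Real.exp (-(u^2/2)) := by
    have h1 : (1/2:ℝ) ≤ Real.exp (-(1/2)) := by
      linarith [Real.add_one_le_exp (-(1/2):ℝ)]
    calc (1/2:ℝ)^r ≤ Real.exp (-(1/2))^r := by gcongr
      _ = Real.exp (r * (-(1/2))) := by rw [← Real.exp_nat_mul]
      _ ≤ _ := by apply Real.exp_le_exp.2; linarith
  have a4 : Real.exp (-u) ≤ 1/u := by
    rw [Real.exp_neg, ← one_div]
    apply one_div_le_one_div_of_le hu0
    linarith [Real.add_one_le_exp u]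
  calc _ ≤ Real.exp (2 * K * (1+u)) *
        (Real.exp 1 * (Real.exp (-(u^2/2)) * Real.exp (2 * K * (1+u)))) := by gcongr
    _ = Real.exp (2 * K * (1+u) + (1 + (-(u^2/2) + 2 * K * (1+u)))) := by
        rw [← Real.exp_add, ← Real.exp_add, ← Real.exp_add]
    _ ≤ Real.exp (-u) := by
        apply Real.exp_le_exp.2
        nlinarith
    _ ≤ _ := a4

lemma numeric (k K m r : ℕ) (u : ℝ) (hK : 1 ≤ K)
    (hu : (2^k * ((k:ℝ)+1) * 3^k * (2*((k:ℝ)+1))^(k+1)) + 16 * K + 10 ≤ u)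
    (hm : Real.exp (u^4) ≤ m) (hr1 : u^2 ≤ r) (hr2 : (r:ℝ) ≤ u^2 + 1) :
    Real.exp (2 * K * (1+u)) * ((((r:ℝ)+1) * Real.exp u ^r) *
        (2^k * (((k+1) * Real.exp u ^r) * (2*m+1)^k))
        + 2 * (cubeSet k m).card * ((1/2)^r * Real.exp (2 * K * (1+u))))
      ≤ (cubeSet k m).card * (2/u) := by
  set C2 := (2^k * ((k:ℝ)+1) * 3^k * (2*((k:ℝ)+1))^(k+1)) with hC2
  have hK' : (1:ℝ) ≤ K := by exact_mod_cast hK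
  have hk1 : (1:ℝ) ≤ (k:ℝ)+1 := by linarith [Nat.cast_nonneg (α := ℝ) k]
  have hC21 : (k:ℝ) + 1 ≤ C2 := by
    have x1 : (1:ℝ) ≤ 2^k := one_le_pow₀ (by norm_num)
    have x2 : (1:ℝ) ≤ 3^k := one_le_pow₀ (by norm_num)
    have x3 : (1:ℝ) ≤ (2*((k:ℝ)+1))^(k+1) := one_le_pow₀ (by linarith)
    calc (k:ℝ)+1 = 1 * (k+1) * 1 * 1 := by ring
      _ ≤ C2 := by rw [hC2]; gcongr
  have hu0 : 0 < u := by linarith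
  have n1 := numeric1 C2 K u r (by linarith) hK' hu hr2
  have n2 := numeric2 K u r hK' (by linarith) hr1
  have hum : u ≤ m := by
    have h1 := Real.add_one_le_exp (u^4)
    have h2 : u ≤ u^4 := le_self_pow₀ (by linarith) (by norm_num)
    linarith
  have hm1 : (1:ℝ) ≤ m := by linarith
  have hkm : k + 1 ≤ m := by
    have : ((k+1 : ℕ):ℝ) ≤ m := by push_cast; linarith
    exact_mod_cast this
  have hc := card_cubeSet_real k m hkm
  set Om : ℝ := ((cubeSet k m).card : ℝ) with hOm
  have hOm0 : 0 ≤ Om := by positivity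
  have hm3 : (2*(m:ℝ)+1)^k ≤ 3^k * (m:ℝ)^k := by
    rw [← mul_pow]
    gcongr
    linarith
  set X := Real.exp u ^ r with hX
  set Ex := Real.exp (2 * K * (1+u)) with hEx
  have hX0 : 0 < X := by positivity
  have hEx0 : 0 < Ex := by positivity
  have hm0 : (0:ℝ) < m := by linarith
  have first : Ex * (((r:ℝ)+1) * X * (2^k * (((k+1) * X) * (2*m+1)^k))) ≤ Om * (1/u) := by
    apply le_of_mul_le_mul_left _ hm0
    calc (m:ℝ) * (Ex * (((r:ℝ)+1) * X * (2^k * (((k+1) * X) * (2*m+1)^k))))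
        ≤ (m:ℝ) * (Ex * (((r:ℝ)+1) * X * (2^k * (((k+1) * X) * (3^k * (m:ℝ)^k))))) := by gcongr
      _ = (2^k * ((k:ℝ)+1) * 3^k) * Ex * ((r:ℝ)+1) * (X*X) * (m:ℝ)^(k+1) := by ring
      _ ≤ (2^k * ((k:ℝ)+1) * 3^k) * Ex * ((r:ℝ)+1) * (X*X) * ((2*((k:ℝ)+1))^(k+1) * Om) := by
          gcongr
      _ = (C2 * Ex * ((r:ℝ)+1) * (X*X)) * Om := by rw [hC2]; ring
      _ ≤ (Real.exp (u^4) * (1/u)) * Om := by gcongr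
      _ ≤ (m * (1/u)) * Om := by gcongr
      _ = m * (Om * (1/u)) := by ring
  have second : Ex * (2 * Om * ((1/2)^r * Ex)) ≤ Om * (1/u) := by
    calc _ = Om * (Ex * (2 * ((1/2)^r * Ex))) := by ring
      _ ≤ _ := by gcongr
  rw [mul_add]
  have : Om * (2/u) = Om * (1/u) + Om * (1/u) := by ring
  rw [this]
  exact add_le_add first second

lemma primorial_bound (w u : ℝ) (hw : 0 ≤ w) (hwu : w ≤ u) :
    (primorialLT w : ℝ) ≤ Real.exp (u^2) := by
  have hu : 0 ≤ u := hw.trans hwu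
  have e : primorialLT w = ∏ p ∈ Pfin w, p := rfl
  have hcard : ((Pfin w).card : ℝ) ≤ w := by
    have : Pfin w ⊆ Finset.Icc 1 ⌊w⌋₊ := by
      intro p hp
      have := mem_Pfin.1 hp
      rw [Finset.mem_Icc]
      exact ⟨this.1.pos, Nat.le_floor this.2.le⟩
    have h := Finset.card_le_card this
    rw [Nat.card_Icc] at h
    calc ((Pfin w).card : ℝ) ≤ (⌊w⌋₊ : ℝ) := by exact_mod_cast h
      _ ≤ w := Nat.floor_le hw
  rw [e]
  push_cast
  calc ∏ p ∈ Pfin w, (p:ℝ) ≤ ∏ p ∈ Pfin w, Real.exp u := by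
        apply Finset.prod_le_prod (fun _ _ => by positivity)
        intro p hp
        have := (mem_Pfin.1 hp).2
        linarith [Real.add_one_le_exp u]
    _ = Real.exp ((Pfin w).card * u) := by rw [Finset.prod_const, ← Real.exp_nat_mul]
    _ ≤ _ := by
        apply Real.exp_le_exp.2
        rw [sq]
        gcongr
        linarith

lemma pow_aux (u : ℝ) (h : 10 ≤ u) : u^4 + 2 + u^2 ≤ u^10 := by
  have h1 : (1:ℝ) ≤ u := by linarith
  have q0 : (1:ℝ) ≤ u^4 := one_le_pow₀ h1
  have q2 : u^2 ≤ u^4 := pow_le_pow_right₀ h1 (by norm_num)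
  have q3 : u^5 ≤ u^10 := pow_le_pow_right₀ h1 (by norm_num)
  have q4 : u^5 = u^4 * u := pow_succ u 4
  nlinarith

set_option maxHeartbeats 1000000 in
theorem cramer_model_gowers_uniformity_on_progressions (k : ℕ) (hk : 1 ≤ k) :
    ∃ c C : ℝ, 0 < c ∧ 0 < C ∧ ∃ N₀ : ℝ, ∀ N : ℝ, N₀ ≤ N →
      ∀ w z : ℝ, 2 ≤ w → w ≤ z → z ≤ Qparam N → w ≤ Real.log N ^ ((1 : ℝ) / 100) →
      ∀ W : ℕ, W = primorialLT w →
      ∀ b : ℕ, 1 ≤ b → b ≤ W → Nat.gcd b W = 1 →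
        gowersUN k ((N - b) / W)
            (fun n => ((((Nat.totient W : ℝ) / (W : ℝ)) *
                cramer z ((W : ℤ) * n + (b : ℤ)) : ℝ) : ℂ) - 1)
          ≤ C * w ^ (-c) := by
  obtain ⟨K, hK⟩ : ∃ K : ℕ, K = 2^k := ⟨_, rfl⟩
  have hK1 : 1 ≤ K := by rw [hK]; exact Nat.one_le_two_pow
  obtain ⟨A, hA⟩ : ∃ x : ℝ, x = 2^K * (K:ℝ)^2 := ⟨_, rfl⟩
  have hA0 : 0 ≤ A := by rw [hA]; positivity
  obtain ⟨C3, hC3⟩ : ∃ x : ℝ, x = 2 + 2 * A * Real.exp A := ⟨_, rfl⟩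
  have hC30 : 0 < C3 := by rw [hC3]; positivity
  obtain ⟨C2, hC2⟩ : ∃ x : ℝ, x = (2^k * ((k:ℝ)+1) * 3^k * (2*((k:ℝ)+1))^(k+1)) := ⟨_, rfl⟩
  have hC20 : 0 < C2 := by rw [hC2]; positivity
  obtain ⟨U, hU⟩ : ∃ x : ℝ, x = C2 + 16 * K + 10 := ⟨_, rfl⟩
  have hU10 : 10 ≤ U := by
    have : (0:ℝ) ≤ 16 * K := by positivity
    linarith
  obtain ⟨c, hc⟩ : ∃ x : ℝ, x = (1:ℝ)/2^k := ⟨_, rfl⟩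
  have hc0 : 0 < c := by rw [hc]; positivity
  refine ⟨c, (2^(2^k) * C3)^c, hc0, by positivity, Real.exp (U^10), ?_⟩
  intro N hN w z hw hwz hz hwN W hW b hb1 hbW hgcd
  have hN0 : 0 < N := (Real.exp_pos _).trans_le hN
  have hL : U^10 ≤ Real.log N := (Real.le_log_iff_exp_le hN0).2 hN
  have hL0 : 0 ≤ Real.log N := le_trans (by positivity) hL
  obtain ⟨u, hu⟩ : ∃ u, u = Real.log N ^ ((1:ℝ)/10) := ⟨_, rfl⟩
  have hu0 : 0 ≤ u := by rw [hu]; positivity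
  have hu10 : u^10 = Real.log N := by
    rw [hu, ← Real.rpow_natCast, ← Real.rpow_mul hL0]; norm_num
  have hUu : U ≤ u := by
    apply le_of_pow_le_pow_left₀ (n := 10) (by norm_num) hu0
    rw [hu10]; exact hL
  have hu1 : 10 ≤ u := hU10.trans hUu
  have hNe : N = Real.exp (u^10) := by rw [hu10, Real.exp_log hN0]
  have hwu : w ≤ u := by
    refine hwN.trans ?_
    rw [hu]
    apply Real.rpow_le_rpow_of_exponent_le
    · have : (1:ℝ) ≤ U^10 := one_le_pow₀ (by linarith)
      linarith
    · norm_num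
  have hzu : z ≤ Real.exp u := by
    unfold Qparam at hz; rw [← hu] at hz; exact hz
  have hw0 : 0 < w := by linarith
  have hWb : (W:ℝ) ≤ Real.exp (u^2) := by
    rw [hW]; exact primorial_bound w u hw0.le hwu
  have hW1 : 1 ≤ W := hb1.trans hbW
  have hW0 : (0:ℝ) < W := by exact_mod_cast hW1
  obtain ⟨M, hM⟩ : ∃ x : ℝ, x = (N - b) / W := ⟨_, rfl⟩
  have hmM' : Real.exp (u^4) ≤ ⌊M⌋₊ := by
    have h1 : M - 1 < ⌊M⌋₊ := Nat.sub_one_lt_floor M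
    have h2 : N / W - 1 ≤ M := by
      rw [hM, sub_div]
      have : (b:ℝ)/W ≤ 1 := by
        rw [div_le_one hW0]; exact_mod_cast hbW
      linarith
    have h3 : Real.exp (u^4 + 2) ≤ N / W := by
      rw [le_div_iff₀ hW0]
      calc Real.exp (u^4+2) * W ≤ Real.exp (u^4+2) * Real.exp (u^2) := by gcongr
        _ = Real.exp (u^4 + 2 + u^2) := by rw [← Real.exp_add]
        _ ≤ N := by
            rw [hNe]
            apply Real.exp_le_exp.2
            exact pow_aux u hu1
    have h4 : 3 * Real.exp (u^4) ≤ Real.exp (u^4+2) := by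
      rw [Real.exp_add, mul_comm]
      gcongr
      linarith [Real.add_one_le_exp (2:ℝ)]
    have h5 : 1 ≤ Real.exp (u^4) := Real.one_le_exp (by positivity)
    linarith
  obtain ⟨m, hm⟩ : ∃ x : ℕ, x = ⌊M⌋₊ := ⟨_, rfl⟩
  have hmM : Real.exp (u^4) ≤ m := by rw [hm]; exact hmM'
  obtain ⟨r, hr⟩ : ∃ x : ℕ, x = ⌈u^2⌉₊ := ⟨_, rfl⟩
  have hr1 : u^2 ≤ r := by rw [hr]; exact Nat.le_ceil _
  have hr2 : (r:ℝ) ≤ u^2 + 1 := by rw [hr]; exact (Nat.ceil_lt_add_one (by positivity)).le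
  have hmpos : (0:ℝ) < m := (Real.exp_pos _).trans_le hmM
  have hcardpos : 0 < (cubeSet k m).card := by
    have hum : u ≤ m := by
      have h1 := Real.add_one_le_exp (u^4)
      have h2 : u ≤ u^4 := le_self_pow₀ (by linarith) (by norm_num)
      linarith
    have hkC : (k:ℝ) + 1 ≤ C2 := by
      have x1 : (1:ℝ) ≤ 2^k := one_le_pow₀ (by norm_num)
      have x2 : (1:ℝ) ≤ 3^k := one_le_pow₀ (by norm_num)
      have x3 : (1:ℝ) ≤ (2*((k:ℝ)+1))^(k+1) :=
        one_le_pow₀ (by linarith [Nat.cast_nonneg (α := ℝ) k])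
      calc (k:ℝ)+1 = 1 * (k+1) * 1 * 1 := by ring
        _ ≤ C2 := by rw [hC2]; gcongr
    have hkm : k + 1 ≤ m := by
      have h16 : (0:ℝ) ≤ 16 * K := by positivity
      have : ((k+1 : ℕ):ℝ) ≤ m := by push_cast; linarith
      exact_mod_cast this
    have h := card_cubeSet_ge k m
    have h5 : 1 ≤ m/(k+1) := (Nat.one_le_div_iff (Nat.succ_pos k)).2 hkm
    exact lt_of_lt_of_le (by positivity) h
  have hz1 : 1 ≤ z := by linarith
  have hlogz : Real.log z ≤ u := by
    rw [Real.log_le_iff_le_exp (by linarith)]; exact hzu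
  have hmain : ∀ S : Finset (Fin k → Bool),
      |∑ x ∈ cubeSet k m, ∏ ω ∈ S, nuF (Pset w z) W b (Lf ω x) - (cubeSet k m).card|
        ≤ (cubeSet k m).card * (C3 / w) := by
    intro S
    have h1 := main_sum (m := m) (r := r) (W := W) (b := b) hK S (Pset w z)
      (Real.exp u) (1 + u) (2/w) (fun p h => (mem_Pset h).1)
      (fun p h => by rw [hW]; exact coprime_Pset h) (Real.one_le_exp hu0)
      (fun p h => (mem_Pset h).2.2.le.trans hzu)
      ((Pset_card (by linarith)).trans hzu)
      ((Pset_harm hz1).trans (by linarith)) (Pset_sq hw)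
    have h2 := numeric k K m r u hK1 (by rw [← hC2, ← hU]; exact hUu) hmM hr1 hr2
    refine h1.trans ?_
    have h3 : Real.exp (2^K * (K:ℝ)^2 * (2/w)) - 1 ≤ 2 * A * Real.exp A / w := by
      rw [← hA]
      set x := A * (2/w) with hx
      have hx0 : 0 ≤ x := by positivity
      have hxA : x ≤ A := by
        have : 2/w ≤ 1 := by rw [div_le_one hw0]; exact hw
        calc x ≤ A * 1 := by rw [hx]; gcongr
          _ = A := mul_one _
      have h4 : Real.exp x - 1 ≤ x * Real.exp x := by
        have h5 := Real.add_one_le_exp (-x)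
        have h6 : Real.exp (-x) * Real.exp x = 1 := by rw [← Real.exp_add]; simp
        have h7 := mul_le_mul_of_nonneg_right h5 (Real.exp_pos x).le
        linarith
      calc _ ≤ x * Real.exp x := h4
        _ ≤ x * Real.exp A := by gcongr
        _ = _ := by rw [hx]; ring
    have h4 : (2:ℝ)/u ≤ 2/w := by gcongr
    have h5 := mul_le_mul_of_nonneg_left h4 (Nat.cast_nonneg (α := ℝ) (cubeSet k m).card)
    have h6 := mul_le_mul_of_nonneg_left h3 (Nat.cast_nonneg (α := ℝ) (cubeSet k m).card)
    have e : ((cubeSet k m).card : ℝ) * (C3 / w) = (cubeSet k m).card * (2/w)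
        + (cubeSet k m).card * (2 * A * Real.exp A / w) := by
      rw [hC3, add_div, mul_add]
    rw [e]
    exact add_le_add (h2.trans h5) h6
  subst hm
  rw [← hM]
  have hfin := gowersUN_le k M (fun n => ((((Nat.totient W : ℝ) / (W : ℝ)) *
                cramer z ((W : ℤ) * n + (b : ℤ)) : ℝ) : ℂ) - 1) (nuF (Pset w z) W b) (by
      intro n
      rw [← cramer_eq hwz W b hW hgcd n, Complex.ofReal_sub, Complex.ofReal_one])
      (C3/w) hcardpos hmain
  refine hfin.trans (le_of_eq ?_)
  rw [← hc, ← mul_div_assoc, Real.div_rpow (mul_nonneg (pow_nonneg zero_le_two _) hC30.le) hw0.le, Real.rpow_neg hw0.le,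
    div_eq_mul_inv]
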